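/- For every integer k ≥ 1, the left-normed commutator word w_k = [x_1, …, x_k] is good. -/

import Mathlib

open scoped Classical

/-- The commutator `[x, y] = x⁻¹y⁻¹xy` (the convention used in the paper). -/
def pcomm {G : Type*} [Group G] (x y : G) : G := x⁻¹ * y⁻¹ * x * y

/-- The left-normed commutator word `w_k = [x₁, …, x_k] ∈ F_k`,
defined inductively by `w₁ = x₁` and `w_{j+1} = [w_j, x_{j+1}]`. -/
def commWord : (k : ℕ) → FreeGroup (Fin k)
  | 0 => 1
  | 1 => FreeGroup.of 0
  | (k + 2) =>
      pcomm (FreeGroup.map Fin.castSucc (commWord (k + 1))) (FreeGroup.of (Fin.last (k + 1)))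

/-- The left-normed commutator `[g₁, …, g_k]` of group elements. -/
def commElt {G : Type*} [Group G] : {k : ℕ} → (Fin k → G) → G
  | 0, _ => 1
  | 1, f => f 0
  | (_ + 2), f => pcomm (commElt (fun i => f i.castSucc)) (f (Fin.last _))

/-- The word `[x₁², x₂, …, x_k] ∈ F_k`, defined inductively by
`u₁ = x₁²` and `u_{j+1} = [u_j, x_{j+1}]`. -/
def sqCommWord : (k : ℕ) → FreeGroup (Fin k)
  | 0 => 1
  | 1 => FreeGroup.of 0 ^ 2
  | (k + 2) =>
      pcomm (FreeGroup.map Fin.castSucc (sqCommWord (k + 1))) (FreeGroup.of (Fin.last (k + 1)))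

/-- `P_{G,w}(g) = |w_G⁻¹(g)| / |G|^k`, the probability that the word map of `w`
takes the value `g` on a uniformly random `k`-tuple. -/
noncomputable def wordProb {k : ℕ} {G : Type*} [Group G] (w : FreeGroup (Fin k)) (g : G) : ℝ :=
  (Nat.card {f : Fin k → G // FreeGroup.lift f w = g} : ℝ) / (Nat.card G : ℝ) ^ k

/-- A group is residually finite if every nontrivial element is excluded by
some normal subgroup of finite index. -/
def ResiduallyFinite (Γ : Type*) [Group Γ] : Prop :=
  ∀ g : Γ, g ≠ 1 → ∃ Δ : Subgroup Γ, Δ.Normal ∧ Δ.FiniteIndex ∧ g ∉ Δ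

/-- A word `w ≠ 1` is a probabilistic identity of `Γ` if for some `ε > 0` every
finite quotient `H` of `Γ` satisfies `P_{H,w}(1) ≥ ε`. -/
def IsProbIdentity {k : ℕ} (Γ : Type*) [Group Γ] (w : FreeGroup (Fin k)) : Prop :=
  w ≠ 1 ∧ ∃ ε : ℝ, 0 < ε ∧
    ∀ (Δ : Subgroup Γ) [Δ.Normal], Δ.FiniteIndex → ε ≤ wordProb w (1 : Γ ⧸ Δ)

/-- `G(H)`: the intersection of the kernels of all homomorphisms from `G` to `H`. -/
def kerInt (G H : Type*) [Group G] [Group H] : Subgroup G := ⨅ φ : G →* H, φ.ker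

/-- A word `1 ≠ w ∈ F_k` is good if for every `ε > 0` there is a word `1 ≠ v ∈ F_m`,
depending only on `w` and `ε`, which is an identity of every finite group `G`
satisfying `P_{G,w}(g) ≥ ε` for some `g ∈ G`. -/
def IsGood {k : ℕ} (w : FreeGroup (Fin k)) : Prop :=
  w ≠ 1 ∧ ∀ ε : ℝ, 0 < ε → ∃ (m : ℕ) (v : FreeGroup (Fin m)), v ≠ 1 ∧
    ∀ (G : Type) [Group G] [Finite G],
      (∃ g : G, ε ≤ wordProb w g) → ∀ f : Fin m → G, FreeGroup.lift f v = 1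


theorem map_pcomm' {G H : Type*} [Group G] [Group H] (φ : G →* H) (x y : G) :
    φ (pcomm x y) = pcomm (φ x) (φ y) := by
  simp [pcomm]

theorem lift_commWord {G : Type*} [Group G] : ∀ (k : ℕ) (f : Fin k → G),
    FreeGroup.lift f (commWord k) = commElt f
  | 0, f => by simp [commWord, commElt]
  | 1, f => by simp [commWord, commElt]
  | (k + 2), f => by
      have ih := lift_commWord (k + 1) (fun i => f i.castSucc)
      rw [commWord, commElt, map_pcomm', ← ih]
      congr 1
      · rw [← MonoidHom.comp_apply]
        congr 1
        ext i
        simp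
      · simp

theorem map_commElt {G H : Type*} [Group G] [Group H] (φ : G →* H) : ∀ (k : ℕ) (f : Fin k → G),
    φ (commElt f) = commElt (fun i => φ (f i))
  | 0, f => by simp [commElt]
  | 1, f => by simp [commElt]
  | (k + 2), f => by
      have ih := map_commElt φ (k + 1) (fun i => f i.castSucc)
      rw [commElt, commElt, map_pcomm', ih]

/-- The number of solutions of `[y, x] = g` is at most the order of the centralizer of `y`. -/
theorem card_pcomm_le {G : Type*} [Group G] [Finite G] (y g : G) :
    Nat.card {x : G // pcomm y x = g} ≤ Nat.card (Subgroup.centralizer {y}) := by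
  by_cases h : Nonempty {x : G // pcomm y x = g}
  · obtain ⟨x0, h0⟩ := h
    refine Nat.card_le_card_of_injective
      (fun x => (⟨x.1 * x0⁻¹, ?_⟩ : Subgroup.centralizer {y})) ?_
    · have hx := x.2.trans h0.symm
      simp only [pcomm, mul_assoc] at hx
      have h1 : x.1⁻¹ * (y * x.1) = x0⁻¹ * (y * x0) := mul_left_cancel hx
      rw [Subgroup.mem_centralizer_singleton_iff]
      have h2 : y * x.1 = x.1 * (x0⁻¹ * (y * x0)) := by rw [← h1]; group
      rw [← mul_assoc y, h2]
      group
    · intro a b hab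
      have := congrArg Subtype.val hab
      simp only [mul_left_inj] at this
      exact Subtype.ext this
  · rw [not_nonempty_iff] at h
    simp

/-- The centralizer of all `n`-th powers. -/
def cpow (G : Type*) [Group G] (n : ℕ) : Subgroup G :=
  Subgroup.centralizer (Set.range fun h : G => h ^ n)

instance cpow_normal (G : Type*) [Group G] (n : ℕ) : (cpow G n).Normal := by
  constructor
  intro y hy g
  rw [cpow, Subgroup.mem_centralizer_iff] at *
  rintro _ ⟨h, rfl⟩
  have := hy _ ⟨g⁻¹ * h * g, rfl⟩
  have e : (g⁻¹ * h * g) ^ n = g⁻¹ * h ^ n * g := by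
    have := conj_pow (i := n) (a := g⁻¹) (b := h)
    simpa using this
  simp only [e] at this
  calc h ^ n * (g * y * g⁻¹) = g * (g⁻¹ * h ^ n * g * y) * g⁻¹ := by group
    _ = g * (y * (g⁻¹ * h ^ n * g)) * g⁻¹ := by rw [this]
    _ = _ := by group

theorem mem_cpow_of {G : Type*} [Group G] [Finite G] (y g : G) (δ : ℝ) (hδ : 0 < δ)
    (h : δ * Nat.card G ≤ Nat.card {x : G // pcomm y x = g}) :
    y ∈ cpow G (Nat.factorial ⌊1 / δ⌋₊) := by
  rw [cpow, Subgroup.mem_centralizer_iff]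
  rintro _ ⟨a, rfl⟩
  have h1 : δ * Nat.card G ≤ Nat.card (Subgroup.centralizer {y}) :=
    h.trans (by exact_mod_cast card_pcomm_le y g)
  have h2 := (Subgroup.centralizer {y}).index_mul_card
  have hpos : (0 : ℝ) < Nat.card (Subgroup.centralizer {y}) := by exact_mod_cast Nat.card_pos
  have h3 : (Subgroup.centralizer {y}).index ≤ ⌊1 / δ⌋₊ := by
    apply Nat.le_floor
    rw [le_div_iff₀ hδ]
    rw [← h2] at h1
    push_cast at h1
    nlinarith
  obtain ⟨m, hm0, hm, hmem⟩ := Subgroup.exists_pow_mem_of_index_ne_zero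
    (H := Subgroup.centralizer {y}) Subgroup.FiniteIndex.index_ne_zero a
  obtain ⟨q, hq⟩ := Nat.dvd_factorial hm0 (hm.trans h3)
  have : a ^ (Nat.factorial ⌊1 / δ⌋₊) ∈ Subgroup.centralizer {y} := by
    rw [hq, pow_mul]; exact Subgroup.pow_mem _ hmem q
  rw [Subgroup.mem_centralizer_singleton_iff] at this
  exact this

theorem card_step {G : Type*} [Group G] [Finite G] (j : ℕ) (g : G) (δ : ℝ) (hδ : 0 < δ)
    (h : 2 * δ * (Nat.card G : ℝ) ^ (j + 2) ≤
      Nat.card {f : Fin (j + 2) → G // commElt f = g}) :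
    δ * (Nat.card G : ℝ) ^ (j + 1) ≤
      Nat.card {f : Fin (j + 1) → G // commElt f ∈ cpow G (Nat.factorial ⌊1 / δ⌋₊)} := by
  have := Fintype.ofFinite G
  set C := cpow G (Nat.factorial ⌊1 / δ⌋₊) with hC
  have h1 : Nat.card {f : Fin (j + 2) → G // commElt f = g} ≤
      Nat.card (Σ f : Fin (j + 1) → G, {x : G // pcomm (commElt f) x = g}) := by
    refine Nat.card_le_card_of_injective
      (fun f => ⟨fun i => f.1 i.castSucc, ⟨f.1 (Fin.last _), f.2⟩⟩) ?_
    intro a b hab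
    have e1 := congrArg (fun s => s.1) hab
    have e2 := congrArg (fun s => s.2.1) hab
    ext i
    refine Fin.lastCases ?_ (fun i => ?_) i
    · exact e2
    · exact congrFun e1 i
  rw [Nat.card_sigma] at h1
  have h2 : ((∑ f : Fin (j + 1) → G, Nat.card {x : G // pcomm (commElt f) x = g} : ℕ) : ℝ) ≤
      ∑ f : Fin (j + 1) → G,
        ((if commElt f ∈ C then (Nat.card G : ℝ) else 0) + δ * Nat.card G) := by
    push_cast
    refine Finset.sum_le_sum fun f _ => ?_
    have hc : (0 : ℝ) < Nat.card G := by exact_mod_cast Nat.card_pos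
    split_ifs with hf
    · have : (Nat.card {x : G // pcomm (commElt f) x = g} : ℝ) ≤ Nat.card G := by
        exact_mod_cast Nat.card_le_card_of_injective _ Subtype.val_injective
      nlinarith [mul_pos hδ hc]
    · by_contra hcon
      push Not at hcon
      exact hf (mem_cpow_of _ g δ hδ (by linarith))
  rw [Finset.sum_add_distrib, ← Finset.sum_filter, Finset.sum_const, Finset.sum_const,
    ← Fintype.card_subtype, Finset.card_univ, ← Nat.card_eq_fintype_card,
    ← Nat.card_eq_fintype_card, Nat.card_fun, Nat.card_fin, nsmul_eq_mul, nsmul_eq_mul] at h2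
  have hc : (0 : ℝ) < Nat.card G := by exact_mod_cast Nat.card_pos
  have h3 : (Nat.card {f : Fin (j + 2) → G // commElt f = g} : ℝ) ≤ _ :=
    (Nat.cast_le.mpr h1).trans h2
  have h4 := h.trans h3
  push_cast at h4
  refine le_of_mul_le_mul_right ?_ hc
  have e : (Nat.card G : ℝ) ^ (j + 2) = (Nat.card G : ℝ) ^ (j + 1) * Nat.card G := pow_succ _ _
  rw [e] at h4
  linarith

theorem card_quot {G : Type*} [Group G] [Finite G] (j : ℕ) (C : Subgroup G) [C.Normal] (δ : ℝ)
    (h : δ * (Nat.card G : ℝ) ^ j ≤ Nat.card {f : Fin j → G // commElt f ∈ C}) :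
    δ * (Nat.card (G ⧸ C) : ℝ) ^ j ≤ Nat.card {f : Fin j → G ⧸ C // commElt f = 1} := by
  have h1 : Nat.card {f : Fin j → G // commElt f ∈ C} ≤
      Nat.card ({f : Fin j → G ⧸ C // commElt f = 1} × (Fin j → C)) := by
    refine Nat.card_le_card_of_injective
      (fun f => (⟨fun i => (f.1 i : G ⧸ C), ?_⟩,
        fun i => ⟨((f.1 i : G ⧸ C).out)⁻¹ * f.1 i, ?_⟩)) ?_
    · have := map_commElt (QuotientGroup.mk' C) j f.1
      simp only [QuotientGroup.mk'_apply] at this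
      rw [← this]
      exact (QuotientGroup.eq_one_iff _).2 f.2
    · rw [← QuotientGroup.eq]; simp
    · intro a b hab
      have e1 := congrArg (fun s => s.1.1) hab
      have e2 := congrArg (fun s => s.2) hab
      ext i
      have e3 := congrFun e1 i
      have e4 := congrArg Subtype.val (congrFun e2 i)
      simp only at e3 e4
      rw [e3] at e4
      exact mul_left_cancel e4
  rw [Nat.card_prod, Nat.card_fun, Nat.card_fin] at h1
  have h2 : (Nat.card G : ℝ) = Nat.card (G ⧸ C) * Nat.card C := by
    exact_mod_cast C.card_eq_card_quotient_mul_card_subgroup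
  have hc : (0 : ℝ) < (Nat.card C : ℝ) ^ j := by
    have : 0 < Nat.card C := Nat.card_pos
    positivity
  have h3 : (Nat.card {f : Fin j → G // commElt f ∈ C} : ℝ) ≤ _ := Nat.cast_le.mpr h1
  push_cast at h3
  refine le_of_mul_le_mul_right ?_ hc
  rw [h2, mul_pow] at h
  linarith

theorem main_aux (j : ℕ) : ∀ ε : ℝ, 0 < ε → ∃ N : ℕ, 0 < N ∧
    ∀ (G : Type) [Group G] [Finite G] (g : G),
      ε * (Nat.card G : ℝ) ^ (j + 1) ≤ Nat.card {f : Fin (j + 1) → G // commElt f = g} →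
      ∀ f : Fin (j + 1) → G, commElt (fun i => f i ^ N) = 1 := by
  induction j with
  | zero =>
    intro ε hε
    refine ⟨Nat.factorial ⌊1 / ε⌋₊, Nat.factorial_pos _, ?_⟩
    intro G _ _ g h f
    have h1 : Nat.card {f : Fin (0 + 1) → G // commElt f = g} ≤ 1 := by
      rw [Finite.card_le_one_iff_subsingleton]
      constructor
      rintro ⟨a, ha⟩ ⟨b, hb⟩
      ext i
      have : i = 0 := by omega
      subst this
      exact ha.trans hb.symm
    have h2 : ε * (Nat.card G : ℝ) ≤ 1 := by
      have h1' : (Nat.card {f : Fin (0 + 1) → G // commElt f = g} : ℝ) ≤ 1 := by exact_mod_cast h1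
      simpa using h.trans h1'
    have h3 : Nat.card G ≤ ⌊1 / ε⌋₊ := by
      apply Nat.le_floor
      rw [le_div_iff₀ hε]; linarith
    obtain ⟨q, hq⟩ := Nat.dvd_factorial Nat.card_pos h3
    change f 0 ^ _ = 1
    rw [hq, pow_mul, pow_card_eq_one', one_pow]
  | succ j ih =>
    intro ε hε
    obtain ⟨N, hN, H⟩ := ih (ε / 2) (by positivity)
    refine ⟨Nat.factorial ⌊1 / (ε / 2)⌋₊ * N, Nat.mul_pos (Nat.factorial_pos _) hN, ?_⟩
    intro G _ _ g h f
    set n := Nat.factorial ⌊1 / (ε / 2)⌋₊ with hn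
    have h1 := card_step j g (ε / 2) (by positivity) (by
      rw [mul_div_cancel₀ _ (two_ne_zero)]; exact h)
    rw [← hn] at h1
    have h2 := card_quot (j + 1) (cpow G n) (ε / 2) h1
    have h3 := H (G ⧸ cpow G n) 1 h2 (fun i => ((f i.castSucc ^ n : G) : G ⧸ cpow G n))
    have h4 : commElt (fun i : Fin (j + 1) => f i.castSucc ^ (n * N)) ∈ cpow G n := by
      rw [← QuotientGroup.eq_one_iff, ← h3]
      have := map_commElt (QuotientGroup.mk' (cpow G n)) (j + 1)
        (fun i : Fin (j + 1) => f i.castSucc ^ (n * N))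
      simp only [QuotientGroup.mk'_apply] at this
      rw [this]
      simp [pow_mul]
    rw [commElt]
    rw [cpow, Subgroup.mem_centralizer_iff] at h4
    have h5 := h4 _ ⟨f (Fin.last _) ^ N, rfl⟩
    simp only [← pow_mul] at h5
    rw [mul_comm N n] at h5
    rw [pcomm, mul_assoc, ← h5]
    group

theorem pcomm_affine (t s : ℚ) (hs : s ≠ 0) :
    pcomm (Equiv.addRight t) (Equiv.mulLeft₀ s hs) = Equiv.addRight (s⁻¹ * t - t) := by
  ext x
  simp [pcomm, Equiv.Perm.mul_apply, Equiv.Perm.inv_def]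
  field_simp
  ring

theorem exists_affine (s : ℚ) (hs : s ≠ 0) (hs1 : s ≠ 1) (t : ℚ) (ht : t ≠ 0) : ∀ j : ℕ,
    ∃ u : ℚ, u ≠ 0 ∧ commElt (fun i : Fin (j + 1) =>
      if (i : ℕ) = 0 then Equiv.addRight t else Equiv.mulLeft₀ s hs) = Equiv.addRight u
  | 0 => ⟨t, ht, by simp [commElt]⟩
  | (j + 1) => by
      obtain ⟨u, hu, h⟩ := exists_affine s hs hs1 t ht j
      refine ⟨s⁻¹ * u - u, ?_, ?_⟩
      · intro h0
        have : (s⁻¹ - 1) * u = 0 := by linarith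
        rcases mul_eq_zero.1 this with h1 | h1
        · exact hs1 (by rw [← inv_inj, inv_one]; linarith)
        · exact hu h1
      · rw [commElt, ← pcomm_affine u s hs, ← h]
        simp

theorem commElt_pow_ne (j N : ℕ) (hN : 0 < N) :
    commElt (fun i : Fin (j + 1) => (FreeGroup.of i) ^ N) ≠ 1 := by
  intro h
  have h2 : (2 : ℚ) ^ N ≠ 1 := (one_lt_pow₀ (by norm_num) hN.ne').ne'
  have hNq : (N : ℚ) ≠ 0 := by exact_mod_cast hN.ne'
  obtain ⟨u, hu, hh⟩ := exists_affine (2 ^ N) (by positivity) h2 N hNq j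
  have h3 := map_commElt (FreeGroup.lift (fun i : Fin (j + 1) =>
      if (i : ℕ) = 0 then (Equiv.addRight 1 : Equiv.Perm ℚ)
      else Equiv.mulLeft₀ 2 two_ne_zero)) _ (fun i : Fin (j + 1) => (FreeGroup.of i) ^ N)
  rw [h, map_one] at h3
  have ha : ∀ N : ℕ, (Equiv.addRight 1 : Equiv.Perm ℚ) ^ N = Equiv.addRight (N : ℚ) := by
    intro N
    induction N with
    | zero => ext x; simp
    | succ n ih => rw [pow_succ, ih]; ext x; simp; ring
  have hb : ∀ N : ℕ, (Equiv.mulLeft₀ 2 two_ne_zero : Equiv.Perm ℚ) ^ N =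
      Equiv.mulLeft₀ (2 ^ N) (by positivity) := by
    intro N
    induction N with
    | zero => ext x; simp
    | succ n ih => rw [pow_succ, ih]; ext x; simp; ring
  have h4 : (fun i : Fin (j + 1) => if (i : ℕ) = 0 then (Equiv.addRight (N : ℚ) : Equiv.Perm ℚ)
      else Equiv.mulLeft₀ (2 ^ N) (by positivity)) = fun i => FreeGroup.lift
      (fun i : Fin (j + 1) => if (i : ℕ) = 0 then (Equiv.addRight 1 : Equiv.Perm ℚ)
      else Equiv.mulLeft₀ 2 two_ne_zero) (FreeGroup.of i ^ N) := by
    funext i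
    rw [map_pow, FreeGroup.lift_apply_of]
    split_ifs
    · rw [ha]
    · rw [hb]
  rw [h4, ← h3] at hh
  have := congrArg (fun e : Equiv.Perm ℚ => e 0) hh
  simp at this
  exact hu this.symm

/-- For every `k ≥ 1`, the left-normed commutator word
`w_k = [x₁, …, x_k]` is good. -/
theorem stmt8 (k : ℕ) (hk : 1 ≤ k) : IsGood (commWord k) := by
  obtain ⟨j, rfl⟩ : ∃ j, k = j + 1 := ⟨k - 1, by omega⟩
  refine ⟨?_, ?_⟩
  · have := commElt_pow_ne j 1 one_pos
    rw [← lift_commWord] at this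
    intro h
    rw [h] at this
    simp at this
  · intro ε hε
    obtain ⟨N, hN, H⟩ := main_aux j ε hε
    refine ⟨j + 1, _, commElt_pow_ne j N hN, ?_⟩
    rintro G _ _ ⟨g, hg⟩ f
    rw [map_commElt]
    simp only [map_pow, FreeGroup.lift_apply_of]
    apply H G g
    have hc : (0 : ℝ) < (Nat.card G : ℝ) ^ (j + 1) := by
      have : 0 < Nat.card G := Nat.card_pos
      positivity
    rw [wordProb, le_div_iff₀ hc] at hg
    simpa only [lift_commWord] using hg
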